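/- arXiv:2008.00788 — 2 statements merged into one kernel-verified Lean document; each statement's English description precedes it below -/
import Mathlib

section
/- Let u be continuous on Σ_N^+ with finite energy (u ∈ dom E), and for m ≥ 0 let u_m = Σ_{p ∈ V_m} u(p) χ_p^m. Then E(u − u_m) = E(u) − E_{H_m}(u_m|_{V_m}), and u_m converges to u in energy: u_m → u uniformly on Σ_N^+ and E(u − u_m) → 0 as m → ∞. -/
open Filter Topology MeasureTheory Finset Classical

noncomputable section

/-- The one-sided full shift space `Σ_N^+` on `N` symbols; coordinates are indexed
from `0`, so the paper's `x_1 x_2 ⋯` is `x 0, x 1, ⋯` here. It carries the product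
of the discrete topology on `Fin N`. -/
abbrev SSp (N : ℕ) : Type := ℕ → Fin N

/-- The level-`m` vertex set `V_m = {p : p_i = p_{i+1} for all i ≥ m+1}` (1-based),
i.e. the sequences that are constant from (0-based) coordinate `m` on.  It is
realized as a `Finset` via the parametrization by the first `m+1` coordinates;
see `mem_V` for the defining property. -/
noncomputable def V (N m : ℕ) : Finset (SSp N) :=
  (Finset.univ : Finset (Fin (m + 1) → Fin N)).image
    (fun w j => w ⟨min j m, by omega⟩)

lemma const_from (N m : ℕ) (p : SSp N) (h : ∀ i, m ≤ i → p i = p (i + 1)) :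
    ∀ j, m ≤ j → p j = p m := by
  intro j hj
  induction j with
  | zero => have : m = 0 := by omega
            simp [this]
  | succ k ih =>
      rcases Nat.lt_or_ge k m with hk | hk
      · have : m = k + 1 := by omega
        simp [this]
      · rw [← h k hk]
        exact ih hk

/-- Membership in `V N m` is exactly the paper's condition
`p_i = p_{i+1}` for all `i ≥ m+1` (1-based), i.e. `p i = p (i+1)` for all `i ≥ m`. -/
lemma mem_V {N m : ℕ} {p : SSp N} :
    p ∈ V N m ↔ ∀ i, m ≤ i → p i = p (i + 1) := by
  classical
  constructor
  · intro hp i hi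
    simp only [V, Finset.mem_image] at hp
    obtain ⟨w, -, rfl⟩ := hp
    have h1 : min i m = m := by omega
    have h2 : min (i + 1) m = m := by omega
    simp [h1, h2]
  · intro h
    simp only [V, Finset.mem_image]
    refine ⟨fun j => p j, Finset.mem_univ _, ?_⟩
    funext j
    rcases Nat.lt_or_ge j m with hj | hj
    · have : min j m = j := by omega
      simp [this]
    · have : min j m = m := by omega
      simp only [this]
      exact (const_from N m p h j hj).symm

/-- The deleted neighbourhood `U_{p,m} = {q ∈ V_m : q ≠ p, q_i = p_i for 1 ≤ i ≤ m}`
(1-based), i.e. `q` agrees with `p` on the first `m` (0-based: `i < m`) coordinates. -/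
noncomputable def U (N m : ℕ) (p : SSp N) : Finset (SSp N) :=
  (V N m).filter (fun q => q ≠ p ∧ ∀ i, i < m → q i = p i)

/-- `κ_p = min {j : p ∈ V_j}`. -/
noncomputable def kappa (N : ℕ) (p : SSp N) : ℕ := sInf {j | p ∈ V N j}

/-- The difference operator
`H_m u (p) = Σ_{i = κ_p}^{m} Σ_{q ∈ U_{p,i}} (u(q) − u(p))`. -/
noncomputable def H (N m : ℕ) (u : SSp N → ℝ) (p : SSp N) : ℝ :=
  ∑ i ∈ Finset.Icc (kappa N p) m, ∑ q ∈ U N i p, (u q - u p)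

/-- The Dirichlet form `E_{H_m}(u, v) = − Σ_{p ∈ V_m} u(p) · H_m v(p)`. -/
noncomputable def EH (N m : ℕ) (u v : SSp N → ℝ) : ℝ :=
  -∑ p ∈ V N m, u p * H N m v p

/-- The cylinder set `[p_1 ⋯ p_m]`, determined by the first `m` coordinates of `p`. -/
def cyl (N m : ℕ) (p : SSp N) : Set (SSp N) := {x | ∀ i, i < m → x i = p i}

/-- `χ_p^m` : the indicator function of the cylinder set `[p_1 ⋯ p_{m+1}]`. -/
noncomputable def chi (N m : ℕ) (p : SSp N) : SSp N → ℝ :=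
  (cyl N (m + 1) p).indicator 1

/-- `u ∈ dom E`: `u` is continuous and the energy
`E(u) = lim_m E_{H_m}(u|_{V_m})` exists (and is finite). -/
def MemDomE (N : ℕ) (u : SSp N → ℝ) : Prop :=
  Continuous u ∧ ∃ L : ℝ, Tendsto (fun m => EH N m u u) atTop (nhds L)

/-- `v ∈ dom_M E`: `v` has finite energy and vanishes on the boundary `V_M`. -/
def MemDomME (N M : ℕ) (v : SSp N → ℝ) : Prop :=
  MemDomE N v ∧ ∀ p ∈ V N M, v p = 0

/-- `u ∈ 𝒟_M` with `Δ u = f` (strong formulation with boundary `V_M`):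
`u` and `f` are continuous and
`lim_{m → ∞} max_{p ∈ V_m ∖ V_M} |N^{m+1} H_m u(p) − f(p)| = 0`. -/
def IsLaplacianOn (N M : ℕ) (u f : SSp N → ℝ) : Prop :=
  Continuous u ∧ Continuous f ∧
    ∀ ε : ℝ, 0 < ε → ∃ m₀ : ℕ, ∀ m, m₀ ≤ m → ∀ p ∈ V N m, p ∉ V N M →
      |(N : ℝ) ^ (m + 1) * H N m u p - f p| < ε

/-- `u ∈ D_μ` with `Δ u = f` (original definition of the Laplacian):
`u` and `f` are continuous and
`lim_{m → ∞} max_{p ∈ V_m ∖ V_{m−1}} |N^{m+1} H_m u(p) − f(p)| = 0`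
(the level is written `m+1` to avoid natural subtraction). -/
def IsLaplacianDmu (N : ℕ) (u f : SSp N → ℝ) : Prop :=
  Continuous u ∧ Continuous f ∧
    ∀ ε : ℝ, 0 < ε → ∃ m₀ : ℕ, ∀ m, m₀ ≤ m → ∀ p ∈ V N (m + 1), p ∉ V N m →
      |(N : ℝ) ^ (m + 2) * H N (m + 1) u p - f p| < ε

/-- `μ` is the equidistributed Bernoulli measure:
`μ([p_1 ⋯ p_m]) = N^{−m}` for every cylinder set. -/
def IsBernoulli (N : ℕ) (μ : Measure (SSp N)) : Prop :=
  ∀ (m : ℕ) (p : SSp N), μ (cyl N m p) = (N : ENNReal)⁻¹ ^ m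

/-- `ρ(x,y) = min {i : x_i ≠ y_i}` (1-based; `0`-based first disagreement plus one). -/
noncomputable def rho (N : ℕ) (x y : SSp N) : ℕ := sInf {i | x i ≠ y i} + 1

/-- The matrix `(G_m)_{pq}`: `2/N` if `q = p`, `1/N` if `q ∈ U_{p,m}`, `0` otherwise. -/
noncomputable def Gmat (N m : ℕ) (p q : SSp N) : ℝ :=
  if q = p then 2 / N else if q ∈ U N m p then 1 / N else 0

/-- The Green's function
`g(x,y) = Σ_{m=1}^{ρ(x,y)−1} Σ_{r,s ∈ V_m ∖ V_{m−1}} (G_m)_{rs} χ_r^m(x) χ_s^m(y)`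
for `ρ(x,y) > 1`, and `g(x,y) = 0` for `ρ(x,y) = 1` (the sum is then empty). -/
noncomputable def greenFn (N : ℕ) (x y : SSp N) : ℝ :=
  ∑ m ∈ Finset.Icc 1 (rho N x y - 1),
    ∑ r ∈ (V N m).filter (fun r => r ∉ V N (m - 1)),
      ∑ s ∈ (V N m).filter (fun s => s ∉ V N (m - 1)),
        Gmat N m r s * chi N m r x * chi N m s y

/-- The Green's operator `G_μ f (x) = ∫_{Σ_N^+ ∖ {x}} g(x,y) f(y) dμ(y)`. -/
noncomputable def Gop (N : ℕ) (μ : Measure (SSp N)) (f : SSp N → ℝ) (x : SSp N) : ℝ :=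
  ∫ y in ({x}ᶜ : Set (SSp N)), greenFn N x y * f y ∂μ

/-! `EH N n u v` is the sum over the levels `i ≤ n` of `½ ∑ (u q - u p) (v q - v p)`, taken over
the ordered pairs of level-`i` neighbours: distinct points of `V N i` with the same first `i`
coordinates. The approximation `u_m` is `u ∘ stopAt m`, where `stopAt m` overwrites every coordinate
of index `> m` with the one of index `m`. Hence `u - u_m` vanishes on `V N i` for `i ≤ m`, while for
`i > m` level-`i` neighbours are stopped at the same point, so that `u - u_m` has the same
increments as `u` between them. Passing from `u` to `u - u_m` therefore removes exactly the levels
`i ≤ m`, whose total energy is `EH N m u u`, and the energy of `u - u_m` is the tail of a convergent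
series. Uniform convergence is continuity of `u` on the compact space `SSp N`, as
`stopAt m x → x`. -/

section StopAt

variable {α : Type*} {m : ℕ}

/-- The sequence `x` frozen at its value at index `m`. On the shift space this is the retraction
onto `V N m` that sends `x` to the vertex whose level-`m` cylinder contains `x`. -/
def stopAt (m : ℕ) (x : ℕ → α) : ℕ → α := fun j => x (min j m)

lemma stopAt_apply_of_le {j : ℕ} (hj : j ≤ m) (x : ℕ → α) : stopAt m x j = x j := by
  simp only [stopAt, min_eq_left hj]

lemma stopAt_apply_of_ge {j : ℕ} (hj : m ≤ j) (x : ℕ → α) : stopAt m x j = x m := by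
  simp only [stopAt, min_eq_right hj]

lemma stopAt_eq_stopAt_iff {x y : ℕ → α} : stopAt m x = stopAt m y ↔ ∀ i ≤ m, x i = y i := by
  refine ⟨fun h i hi => ?_, fun h => funext fun j => h _ (min_le_right j m)⟩
  rw [← stopAt_apply_of_le hi x, h, stopAt_apply_of_le hi y]

lemma tendsto_stopAt [TopologicalSpace α] (x : ℕ → α) :
    Tendsto (fun y : ℕ × (ℕ → α) => stopAt y.1 y.2) (atTop ×ˢ 𝓝 x) (𝓝 x) := by
  refine tendsto_pi_nhds.2 fun j => ?_
  have hj : Tendsto (fun y : ℕ × (ℕ → α) => y.2 j) (atTop ×ˢ 𝓝 x) (𝓝 (x j)) :=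
    ((continuous_apply j).tendsto x).comp tendsto_snd
  refine hj.congr' ?_
  filter_upwards [tendsto_fst.eventually (eventually_ge_atTop j)] with y hy
  exact (stopAt_apply_of_le hy y.2).symm

lemma tendstoUniformly_comp_stopAt [TopologicalSpace α] [CompactSpace α] {β : Type*}
    [UniformSpace β] {f : (ℕ → α) → β} (hf : Continuous f) :
    TendstoUniformly (fun m x => f (stopAt m x)) f atTop := by
  rw [← tendstoLocallyUniformly_iff_tendstoUniformly_of_compactSpace,
    tendstoLocallyUniformly_iff_forall_tendsto]
  intro x
  have hpair : Tendsto (fun y : ℕ × (ℕ → α) => (f y.2, f (stopAt y.1 y.2)))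
      (atTop ×ˢ 𝓝 x) (𝓝 (f x, f x)) :=
    ((hf.tendsto x).comp tendsto_snd).prodMk_nhds ((hf.tendsto x).comp (tendsto_stopAt x))
  exact hpair.mono_right (nhds_le_uniformity (f x))

end StopAt

lemma sum_sub_mul_sub_of_symm {ι R : Type*} [Ring R] (s : Finset ι) {r : ι → ι → Prop}
    [DecidableRel r] (hr : ∀ p q, r p q ↔ r q p) (u v : ι → R) :
    ∑ p ∈ s, ∑ q ∈ s with r p q, (u q - u p) * (v q - v p)
      = -(2 * ∑ p ∈ s, u p * ∑ q ∈ s with r p q, (v q - v p)) := by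
  have hswap : ∑ p ∈ s, ∑ q ∈ s with r p q, u q * (v q - v p)
      = -∑ p ∈ s, ∑ q ∈ s with r p q, u p * (v q - v p) := by
    simp only [← Finset.sum_neg_distrib, ← mul_neg, neg_sub]
    refine Finset.sum_comm' fun p q => ?_
    simp only [Finset.mem_filter, hr p q]
    tauto
  calc ∑ p ∈ s, ∑ q ∈ s with r p q, (u q - u p) * (v q - v p)
      = ∑ p ∈ s, ∑ q ∈ s with r p q, u q * (v q - v p)
          - ∑ p ∈ s, ∑ q ∈ s with r p q, u p * (v q - v p) := by
        simp only [sub_mul, Finset.sum_sub_distrib]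
    _ = -(2 * ∑ p ∈ s, u p * ∑ q ∈ s with r p q, (v q - v p)) := by
        rw [hswap, ← neg_add', ← two_mul]
        simp only [Finset.mul_sum]

section Energy

variable {N m n i : ℕ} {u u' v v' : SSp N → ℝ} {p q : SSp N}

lemma stopAt_mem_V (m : ℕ) (x : SSp N) : stopAt m x ∈ V N m := by
  refine mem_V.2 fun i hi => ?_
  rw [stopAt_apply_of_ge hi, stopAt_apply_of_ge (hi.trans i.le_succ)]

lemma stopAt_eq_self (hp : p ∈ V N m) : stopAt m p = p := by
  funext j
  rcases le_total j m with hj | hj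
  · exact stopAt_apply_of_le hj p
  · rw [stopAt_apply_of_ge hj, const_from N m p (mem_V.1 hp) j hj]

lemma mem_cyl_succ_iff_stopAt_eq (hp : p ∈ V N m) {x : SSp N} :
    x ∈ cyl N (m + 1) p ↔ stopAt m x = p := by
  rw [← stopAt_eq_self hp, stopAt_eq_stopAt_iff, stopAt_eq_self hp]
  simp only [cyl, Set.mem_ofPred_eq, Nat.lt_succ_iff]

lemma sum_mul_chi (m : ℕ) (u : SSp N → ℝ) (x : SSp N) :
    ∑ p ∈ V N m, u p * chi N m p x = u (stopAt m x) := by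
  have hchi : ∀ p ∈ V N m, u p * chi N m p x = if stopAt m x = p then u p else 0 := by
    intro p hp
    simp only [chi, Set.indicator_apply, mem_cyl_succ_iff_stopAt_eq hp, Pi.one_apply, mul_ite,
      mul_one, mul_zero]
  rw [Finset.sum_congr rfl hchi, Finset.sum_ite_eq, if_pos (stopAt_mem_V m x)]

lemma V_mono (N : ℕ) : Monotone (V N) := fun _ _ h _ hp =>
  mem_V.2 fun j hj => mem_V.1 hp j (h.trans hj)

lemma kappa_le_iff (hp : p ∈ V N m) : kappa N p ≤ i ↔ p ∈ V N i := by
  have hkappa : p ∈ V N (kappa N p) := Nat.sInf_mem (s := {j | p ∈ V N j}) ⟨m, hp⟩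
  exact ⟨fun hi => V_mono N hi hkappa, fun hi => Nat.sInf_le hi⟩

/-- The part of the Dirichlet form carried by the pairs of level-`i` neighbours; the factor `1 / 2`
accounts for each unordered pair being summed twice. -/
def levelForm (N i : ℕ) (u v : SSp N → ℝ) : ℝ :=
  (∑ p ∈ V N i, ∑ q ∈ U N i p, (u q - u p) * (v q - v p)) / 2

lemma levelForm_eq_neg_sum (i : ℕ) (u v : SSp N → ℝ) :
    levelForm N i u v = -∑ p ∈ V N i, u p * ∑ q ∈ U N i p, (v q - v p) := by
  have hsymm : ∀ p q : SSp N,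
      (q ≠ p ∧ ∀ j, j < i → q j = p j) ↔ (p ≠ q ∧ ∀ j, j < i → p j = q j) := fun p q => by
    simp only [ne_comm (a := q), eq_comm (a := q _)]
  simp only [levelForm, U, sum_sub_mul_sub_of_symm (V N i) hsymm]
  ring

lemma EH_eq_sum_levelForm (n : ℕ) (u v : SSp N → ℝ) :
    EH N n u v = ∑ i ∈ Finset.range (n + 1), levelForm N i u v := by
  simp only [EH, H, levelForm_eq_neg_sum, Finset.mul_sum (Finset.Icc _ _), Finset.sum_neg_distrib]
  congr 1
  refine Finset.sum_comm' fun p i => ?_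
  simp only [Finset.mem_Icc, Finset.mem_range, Nat.lt_succ_iff]
  constructor
  · rintro ⟨hp, hkappa, hi⟩
    exact ⟨(kappa_le_iff hp).1 hkappa, hi⟩
  · rintro ⟨hp, hi⟩
    exact ⟨V_mono N hi hp, (kappa_le_iff hp).2 hp, hi⟩

lemma levelForm_congr (hu : ∀ p ∈ V N i, ∀ q ∈ U N i p, u q - u p = u' q - u' p)
    (hv : ∀ p ∈ V N i, ∀ q ∈ U N i p, v q - v p = v' q - v' p) :
    levelForm N i u v = levelForm N i u' v' := by
  unfold levelForm
  congr 1
  refine Finset.sum_congr rfl fun p hp => Finset.sum_congr rfl fun q hq => ?_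
  rw [hu p hp q hq, hv p hp q hq]

lemma levelForm_congr_of_eqOn (hu : Set.EqOn u u' (V N i)) (hv : Set.EqOn v v' (V N i)) :
    levelForm N i u v = levelForm N i u' v' := by
  have hU : ∀ {p q}, q ∈ U N i p → q ∈ V N i := fun hq => (Finset.mem_filter.1 hq).1
  exact levelForm_congr (fun p hp q hq => by rw [hu hp, hu (hU hq)])
    fun p hp q hq => by rw [hv hp, hv (hU hq)]

lemma levelForm_zero_left (i : ℕ) (v : SSp N → ℝ) : levelForm N i 0 v = 0 := by
  simp [levelForm]

lemma EH_congr_of_eqOn (hu : Set.EqOn u u' (V N n)) (hv : Set.EqOn v v' (V N n)) :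
    EH N n u v = EH N n u' v' := by
  simp only [EH_eq_sum_levelForm]
  refine Finset.sum_congr rfl fun i hi => ?_
  have hV : (V N i : Set (SSp N)) ⊆ V N n :=
    V_mono N (Nat.lt_succ_iff.1 (Finset.mem_range.1 hi))
  exact levelForm_congr_of_eqOn (hu.mono hV) (hv.mono hV)

lemma eqOn_comp_stopAt {β : Type*} (him : i ≤ m) (f : SSp N → β) :
    Set.EqOn (f ∘ stopAt m) f (V N i) := fun _ hp =>
  congrArg f (stopAt_eq_self (V_mono N him hp))

lemma stopAt_eq_of_mem_U (hmi : m < i) (hq : q ∈ U N i p) : stopAt m q = stopAt m p :=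
  stopAt_eq_stopAt_iff.2 fun j hj => (Finset.mem_filter.1 hq).2.2 j (hj.trans_lt hmi)

lemma EH_comp_stopAt (m : ℕ) (u v : SSp N → ℝ) :
    EH N m (u ∘ stopAt m) (v ∘ stopAt m) = EH N m u v :=
  EH_congr_of_eqOn (eqOn_comp_stopAt le_rfl u) (eqOn_comp_stopAt le_rfl v)

lemma levelForm_sub_comp_stopAt_of_le (him : i ≤ m) (u v : SSp N → ℝ) :
    levelForm N i (u - u ∘ stopAt m) v = 0 := by
  have hvanish : Set.EqOn (u - u ∘ stopAt m) 0 (V N i) := fun p hp =>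
    sub_eq_zero.2 (eqOn_comp_stopAt him u hp).symm
  rw [levelForm_congr_of_eqOn hvanish (Set.eqOn_refl v _), levelForm_zero_left]

lemma levelForm_sub_comp_stopAt_of_lt (hmi : m < i) (u v : SSp N → ℝ) :
    levelForm N i (u - u ∘ stopAt m) (v - v ∘ stopAt m) = levelForm N i u v := by
  have hincrement (w : SSp N → ℝ) {p q : SSp N} (hq : q ∈ U N i p) :
      (w - w ∘ stopAt m) q - (w - w ∘ stopAt m) p = w q - w p := by
    simp only [Pi.sub_apply, Function.comp_apply, stopAt_eq_of_mem_U hmi hq,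
      sub_sub_sub_cancel_right]
  exact levelForm_congr (fun _ _ _ => hincrement u) fun _ _ _ => hincrement v

lemma EH_sub_comp_stopAt (hmn : m ≤ n) (u v : SSp N → ℝ) :
    EH N n (u - u ∘ stopAt m) (v - v ∘ stopAt m) = EH N n u v - EH N m u v := by
  have hle : m + 1 ≤ n + 1 := Nat.succ_le_succ hmn
  have hlow : ∑ i ∈ Finset.range (m + 1),
      levelForm N i (u - u ∘ stopAt m) (v - v ∘ stopAt m) = 0 :=
    Finset.sum_eq_zero fun i hi =>
      levelForm_sub_comp_stopAt_of_le (Nat.lt_succ_iff.1 (Finset.mem_range.1 hi)) u _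
  calc EH N n (u - u ∘ stopAt m) (v - v ∘ stopAt m)
      = ∑ i ∈ Finset.Ico (m + 1) (n + 1),
          levelForm N i (u - u ∘ stopAt m) (v - v ∘ stopAt m) := by
        rw [EH_eq_sum_levelForm, ← Finset.sum_range_add_sum_Ico _ hle, hlow, zero_add]
    _ = ∑ i ∈ Finset.Ico (m + 1) (n + 1), levelForm N i u v :=
        Finset.sum_congr rfl fun i hi =>
          levelForm_sub_comp_stopAt_of_lt (Finset.mem_Ico.1 hi).1 u v
    _ = EH N n u v - EH N m u v := by
        rw [EH_eq_sum_levelForm, EH_eq_sum_levelForm, Finset.sum_Ico_eq_sub _ hle]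

lemma tendsto_EH_sub_comp_stopAt (m : ℕ) {L : ℝ}
    (hL : Tendsto (fun n => EH N n u v) atTop (𝓝 L)) :
    Tendsto (fun n => EH N n (u - u ∘ stopAt m) (v - v ∘ stopAt m)) atTop
      (𝓝 (L - EH N m u v)) := by
  refine (hL.sub_const _).congr' ?_
  filter_upwards [eventually_ge_atTop m] with n hmn
  exact (EH_sub_comp_stopAt hmn u v).symm

end Energy

/-- For `u ∈ dom E` (with energy `E(u) = L`) and
`u_m = Σ_{p ∈ V_m} u(p) χ_p^m`: `E(u − u_m) = E(u) − E_{H_m}(u_m)`, and `u_m → u`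
in energy: `u_m → u` uniformly and `E(u − u_m) → 0` as `m → ∞`. -/
theorem statement4 (N : ℕ) (hN : 2 ≤ N) (u : SSp N → ℝ) (hu : Continuous u) (L : ℝ)
    (hL : Tendsto (fun n => EH N n u u) atTop (nhds L)) :
    (∀ m : ℕ,
      Tendsto (fun n => EH N n (fun x => u x - ∑ p ∈ V N m, u p * chi N m p x)
          (fun x => u x - ∑ p ∈ V N m, u p * chi N m p x)) atTop
        (nhds (L - EH N m (fun x => ∑ p ∈ V N m, u p * chi N m p x)
                          (fun x => ∑ p ∈ V N m, u p * chi N m p x)))) ∧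
    TendstoUniformly (fun m x => ∑ p ∈ V N m, u p * chi N m p x) u atTop ∧
    Tendsto (fun m => L - EH N m (fun x => ∑ p ∈ V N m, u p * chi N m p x)
                             (fun x => ∑ p ∈ V N m, u p * chi N m p x)) atTop
      (nhds 0) := by
  have hchi (m : ℕ) : (fun x => ∑ p ∈ V N m, u p * chi N m p x) = u ∘ stopAt m :=
    funext (sum_mul_chi m u)
  have hsub (m : ℕ) : (fun x => u x - ∑ p ∈ V N m, u p * chi N m p x) = u - u ∘ stopAt m :=
    congrArg (u - ·) (hchi m)
  simp only [hsub, hchi, EH_comp_stopAt]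
  refine ⟨fun m => tendsto_EH_sub_comp_stopAt m hL, ?_, ?_⟩
  · simpa only [sum_mul_chi] using tendstoUniformly_comp_stopAt hu
  · simpa only [sub_self] using hL.const_sub L
end
end

section
/- Dirichlet boundary value problem: For every continuous f : Σ_N^+ → ℝ and every ζ : V_0 → ℝ there exists u ∈ D_0 such that Δu = f and u(p) = ζ(p) for all p ∈ V_0. Moreover, the solution is unique up to harmonic functions vanishing on V_0: if u_1, u_2 are two such solutions, then h = u_1 − u_2 satisfies Δh = 0 and h|_{V_0} = 0. -/
open Filter Topology MeasureTheory Finset Classical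

noncomputable section

/-! Call a function `F` on cylinders *additive* if the masses of the `N` subcylinders of a cylinder
add up to its mass. For additive `F`, a function `u` with `H_m u(p) = F [p_1 ⋯ p_{m+1}]` for all
`m` and all `p ∈ V_m ∖ V_0` can be written down: choose `u` on constant sequences freely and add,
for each coordinate `n + 2` at which `x` jumps, a term depending on `x_1 ⋯ x_{n+2}` only. For
`p ∈ V_{n+1}` the inner sum of `H u` over `U_{p,n+1}` sees only the jump term of index `n`. That
term is chosen so that the inner sum is `F [p_1 ⋯ p_{n+2}]` if `κ_p = n + 1` and
`F [p_1 ⋯ p_{n+2}] - F [p_1 ⋯ p_{n+1}]` if `κ_p < n + 1`, so `H_m u(p)` telescopes. Taking for `F`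
the integrals of `f` against the equidistributed Bernoulli measure makes `N^{m+1} H_m u(p)` the
mean of `f` over `[p_1 ⋯ p_{m+1}]`, which tends to `f p` uniformly. -/

section Cylinder

variable {E : ℕ → Type*} [∀ n, TopologicalSpace (E n)] [∀ n, DiscreteTopology (E n)]

lemma continuous_of_dependsOn_Iio {Y : Type*} [TopologicalSpace Y] {g : (∀ n, E n) → Y} {m : ℕ}
    (hg : DependsOn g (Set.Iio m)) : Continuous g :=
  continuous_iff_continuousAt.2 fun x =>
    (continuousAt_const (y := g x)).congr <| by
      filter_upwards [(PiNat.isOpen_cylinder E x m).mem_nhds (PiNat.self_mem_cylinder x m)]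
        with y hy
      exact (hg hy).symm

lemma exists_forall_mem_cylinder_dist_lt [CompactSpace (∀ n, E n)] {Y : Type*}
    [PseudoMetricSpace Y] {f : (∀ n, E n) → Y} (hf : Continuous f) {ε : ℝ} (hε : 0 < ε) :
    ∃ m, ∀ x, ∀ y ∈ PiNat.cylinder x m, dist (f y) (f x) < ε := by
  let : MetricSpace (∀ n, E n) := PiNat.metricSpace
  obtain ⟨δ, hδ, hfδ⟩ :=
    Metric.uniformContinuous_iff.1 (CompactSpace.uniformContinuous_of_continuous hf) ε hε
  obtain ⟨m, hm⟩ := exists_pow_lt_of_lt_one hδ one_half_lt_one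
  exact ⟨m, fun x y hy => hfδ ((PiNat.mem_cylinder_iff_dist_le.1 hy).trans_lt hm)⟩

end Cylinder

section Vertices

variable {N m n : ℕ} {p : SSp N}

/-- The vertex `p_1 ⋯ p_m s s s ⋯`; for varying `s` these are the points of `U_{p,m}`, together
with `p` itself when `p ∈ V_m`. -/
def graft (p : SSp N) (m : ℕ) (s : Fin N) : SSp N := fun j => if j < m then p j else s

lemma graft_of_lt {j : ℕ} (p : SSp N) (s : Fin N) (h : j < m) : graft p m s j = p j := if_pos h

lemma graft_of_le {j : ℕ} (p : SSp N) (s : Fin N) (h : m ≤ j) : graft p m s j = s :=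
  if_neg h.not_gt

lemma graft_injective (p : SSp N) (m : ℕ) : Function.Injective (graft p m) := fun s t h => by
  simpa only [graft_of_le p _ le_rfl] using congrFun h m

lemma graft_mem_V (p : SSp N) (m : ℕ) (s : Fin N) : graft p m s ∈ V N m :=
  mem_V.2 fun i hi => by rw [graft_of_le p s hi, graft_of_le p s (hi.trans i.le_succ)]

lemma graft_eq_update {j : ℕ} (p : SSp N) (s : Fin N) (h : j < m + 1) :
    graft p m s j = Function.update p m s j := by
  rcases (Nat.lt_succ_iff.1 h).eq_or_lt with rfl | hj
  · rw [graft_of_le p s le_rfl, Function.update_self]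
  · rw [graft_of_lt p s hj, Function.update_of_ne hj.ne]

lemma eq_graft_of_mem_V {q : SSp N} (hq : q ∈ V N m) (hqp : ∀ i, i < m → q i = p i) :
    q = graft p m (q m) := by
  funext j
  rcases lt_or_ge j m with hj | hj
  · rw [graft_of_lt p _ hj, hqp j hj]
  · rw [graft_of_le p _ hj, const_from N m q (mem_V.1 hq) j hj]

lemma V_mono_s10 (h : m ≤ n) : V N m ⊆ V N n := fun _ hp =>
  mem_V.2 fun i hi => mem_V.1 hp i (h.trans hi)

lemma mem_V_kappa (hp : p ∈ V N m) : p ∈ V N (kappa N p) :=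
  Nat.sInf_mem (s := {j | p ∈ V N j}) ⟨m, hp⟩

lemma kappa_le (hp : p ∈ V N m) : kappa N p ≤ m :=
  Nat.sInf_le (s := {j | p ∈ V N j}) hp

lemma apply_succ_ne_of_kappa_eq_succ (hp : p ∈ V N (n + 1)) (hk : kappa N p = n + 1) :
    p (n + 1) ≠ p n := by
  intro h
  have hmem : p ∈ V N n := mem_V.2 fun i hi => by
    rcases hi.eq_or_lt with rfl | hi
    exacts [h.symm, mem_V.1 hp i hi]
  have := kappa_le hmem
  omega

lemma U_eq_erase_image_graft (m : ℕ) (p : SSp N) :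
    U N m p = (univ.image (graft p m)).erase p := by
  ext q
  simp only [U, mem_filter, mem_erase, mem_image, mem_univ, true_and]
  constructor
  · rintro ⟨hq, hne, hqp⟩
    exact ⟨hne, q m, (eq_graft_of_mem_V hq hqp).symm⟩
  · rintro ⟨hne, s, rfl⟩
    exact ⟨graft_mem_V p m s, hne, fun j hj => graft_of_lt p s hj⟩

lemma sum_U_sub (m : ℕ) (u : SSp N → ℝ) (p : SSp N) :
    ∑ q ∈ U N m p, (u q - u p) = ∑ s, u (graft p m s) - N * u p := by
  rw [U_eq_erase_image_graft, sum_erase (f := fun q => u q - u p) _ (sub_self (u p)),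
    sum_image (graft_injective p m).injOn, sum_sub_distrib, sum_const, card_univ,
    Fintype.card_fin, nsmul_eq_mul]

lemma H_kappa (u : SSp N → ℝ) (p : SSp N) :
    H N (kappa N p) u p = ∑ q ∈ U N (kappa N p) p, (u q - u p) := by
  rw [H, Icc_self, sum_singleton]

lemma H_succ (u : SSp N → ℝ) (h : kappa N p ≤ m + 1) :
    H N (m + 1) u p = H N m u p + ∑ q ∈ U N (m + 1) p, (u q - u p) :=
  sum_Icc_succ_top h _

lemma H_sub (m : ℕ) (u v : SSp N → ℝ) (p : SSp N) :
    H N m (fun x => u x - v x) p = H N m u p - H N m v p := by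
  simp only [H, ← sum_sub_distrib, sub_sub_sub_comm]

end Vertices

lemma IsLaplacianOn.sub {N M : ℕ} {u₁ u₂ f₁ f₂ : SSp N → ℝ} (h₁ : IsLaplacianOn N M u₁ f₁)
    (h₂ : IsLaplacianOn N M u₂ f₂) :
    IsLaplacianOn N M (fun x => u₁ x - u₂ x) (fun x => f₁ x - f₂ x) := by
  obtain ⟨hu₁, hf₁, hlim₁⟩ := h₁
  obtain ⟨hu₂, hf₂, hlim₂⟩ := h₂
  refine ⟨hu₁.sub hu₂, hf₁.sub hf₂, fun ε hε => ?_⟩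
  obtain ⟨m₁, hm₁⟩ := hlim₁ (ε / 2) (half_pos hε)
  obtain ⟨m₂, hm₂⟩ := hlim₂ (ε / 2) (half_pos hε)
  refine ⟨max m₁ m₂, fun m hm p hp hpM => ?_⟩
  calc |(N : ℝ) ^ (m + 1) * H N m (fun x => u₁ x - u₂ x) p - (f₁ p - f₂ p)|
      = |((N : ℝ) ^ (m + 1) * H N m u₁ p - f₁ p) -
          ((N : ℝ) ^ (m + 1) * H N m u₂ p - f₂ p)| := by rw [H_sub]; ring_nf
    _ ≤ |(N : ℝ) ^ (m + 1) * H N m u₁ p - f₁ p| + |(N : ℝ) ^ (m + 1) * H N m u₂ p - f₂ p| :=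
        abs_sub _ _
    _ < ε / 2 + ε / 2 := add_lt_add (hm₁ m (le_of_max_le_left hm) p hp hpM)
        (hm₂ m (le_of_max_le_right hm) p hp hpM)
    _ = ε := add_halves ε

section JumpSeries

/-- A family of jump terms: `a n x` is a function of the first `n + 2` coordinates of `x` that
vanishes unless the last two of these differ. -/
structure IsJumpFamily {N : ℕ} (a : ℕ → SSp N → ℝ) : Prop where
  dependsOn : ∀ n, DependsOn (a n) (Set.Iio (n + 2))
  eq_zero : ∀ n x, x (n + 1) = x n → a n x = 0

/-- The function with value `ζ` on constant sequences that changes by `a n` at coordinate `n + 1`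
(counted from `0`). -/
def jumpSeries {N : ℕ} (ζ : SSp N → ℝ) (a : ℕ → SSp N → ℝ) (x : SSp N) : ℝ :=
  ζ (fun _ => x 0) + ∑' n, a n x

variable {N : ℕ} {ζ : SSp N → ℝ} {a : ℕ → SSp N → ℝ}

lemma jumpSeries_of_mem_V (ha : IsJumpFamily a) {m : ℕ} {p : SSp N} (hp : p ∈ V N m) :
    jumpSeries ζ a p = ζ (fun _ => p 0) + ∑ n ∈ range m, a n p := by
  have htail : ∀ n ∉ range m, a n p = 0 := fun n hn =>
    ha.eq_zero n p (mem_V.1 hp n (not_lt.1 (mt mem_range.2 hn))).symm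
  rw [jumpSeries, tsum_eq_sum htail]

lemma jumpSeries_of_mem_V_zero (ha : IsJumpFamily a) {p : SSp N} (hp : p ∈ V N 0) :
    jumpSeries ζ a p = ζ p := by
  have hconst : (fun _ => p 0) = p :=
    funext fun j => (const_from N 0 p (mem_V.1 hp) j j.zero_le).symm
  rw [jumpSeries_of_mem_V ha hp, range_zero, sum_empty, add_zero, hconst]

lemma continuous_jumpSeries (ha : IsJumpFamily a) {b : ℕ → ℝ} (hb : Summable b)
    (hab : ∀ n x, |a n x| ≤ b n) : Continuous (jumpSeries ζ a) := by
  have hζ : DependsOn (fun x : SSp N => ζ fun _ => x 0) (Set.Iio 1) := fun x y h => by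
    simp only [h 0 (Set.mem_Iio.2 one_pos)]
  exact (continuous_of_dependsOn_Iio hζ).add
    (continuous_tsum (fun n => continuous_of_dependsOn_Iio (ha.dependsOn n)) hb hab)

lemma jumpSeries_graft (ha : IsJumpFamily a) (p : SSp N) (n : ℕ) (s : Fin N) :
    jumpSeries ζ a (graft p (n + 1) s) =
      ζ (fun _ => p 0) + ∑ j ∈ range n, a j p + a n (Function.update p (n + 1) s) := by
  have hsum : ∑ j ∈ range n, a j (graft p (n + 1) s) = ∑ j ∈ range n, a j p :=
    sum_congr rfl fun j hj => ha.dependsOn j fun i hi => graft_of_lt p s <| by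
      have := mem_range.1 hj
      have := Set.mem_Iio.1 hi
      omega
  have hlast : a n (graft p (n + 1) s) = a n (Function.update p (n + 1) s) :=
    ha.dependsOn n fun i hi => graft_eq_update p s hi
  rw [jumpSeries_of_mem_V ha (graft_mem_V p (n + 1) s), sum_range_succ, hsum, hlast,
    graft_of_lt p s n.succ_pos, add_assoc]

lemma sum_U_jumpSeries (ha : IsJumpFamily a) {p : SSp N} {n : ℕ} (hp : p ∈ V N (n + 1)) :
    ∑ q ∈ U N (n + 1) p, (jumpSeries ζ a q - jumpSeries ζ a p) =
      ∑ s, a n (Function.update p (n + 1) s) - N * a n p := by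
  rw [sum_U_sub]
  simp only [jumpSeries_graft ha, jumpSeries_of_mem_V ha hp, sum_range_succ, sum_add_distrib,
    sum_const, card_univ, Fintype.card_fin, nsmul_eq_mul]
  ring

end JumpSeries

section GreenJump

/-- An additive function on cylinders: `F m x` is the mass of the cylinder of length `m` around
`x`, and it is the sum of the masses of the subcylinders of length `m + 1`. -/
structure IsCylinderContent {N : ℕ} (F : ℕ → SSp N → ℝ) : Prop where
  dependsOn : ∀ m, DependsOn (F m) (Set.Iio m)
  sum_update : ∀ m x, ∑ s, F (m + 1) (Function.update x m s) = F m x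

/-- The jump terms of the solution whose Laplacian has cylinder masses `F`. The paper's matrix `G_m`
(`2 / N` on the diagonal, `1 / N` off it) is visible here: up to sign, a nonzero term is `1 / N`
times the total mass of the cylinders `[x_1 ⋯ x_{n+1} s]` with `s ≠ x_{n+1}`, the one containing
`x` being counted twice. -/
def greenJump {N : ℕ} (F : ℕ → SSp N → ℝ) (n : ℕ) (x : SSp N) : ℝ :=
  if x (n + 1) = x n then 0
  else -(F (n + 2) x + (F (n + 1) x - F (n + 2) (Function.update x (n + 1) (x n)))) / N

variable {N : ℕ} {F : ℕ → SSp N → ℝ} {ζ : SSp N → ℝ}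

lemma isJumpFamily_greenJump (hF : ∀ m, DependsOn (F m) (Set.Iio m)) :
    IsJumpFamily (greenJump F) where
  dependsOn n x y hxy := by
    have hn : x n = y n := hxy n (Set.mem_Iio.2 (by omega))
    have hupdate : ∀ i ∈ Set.Iio (n + 2),
        Function.update x (n + 1) (y n) i = Function.update y (n + 1) (y n) i := fun i hi => by
      simp only [Function.update_apply, hxy i hi]
    rw [greenJump, greenJump, hn, hxy (n + 1) (Set.mem_Iio.2 (by omega)), hF (n + 2) hxy,
      (hF (n + 1)).mono (Set.Iio_subset_Iio n.succ.le_succ) hxy, hF (n + 2) hupdate]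
  eq_zero _ _ h := if_pos h

lemma abs_greenJump_le {b : ℕ → ℝ} (hb : ∀ m x, |F m x| ≤ b m) (n : ℕ) (x : SSp N) :
    |greenJump F n x| ≤ 2 * b (n + 2) + b (n + 1) := by
  have hN : (1 : ℝ) ≤ N := by exact_mod_cast (x 0).pos
  have h₁ := abs_le.1 (hb (n + 1) x)
  have h₂ := abs_le.1 (hb (n + 2) x)
  have h₃ := abs_le.1 (hb (n + 2) (Function.update x (n + 1) (x n)))
  rw [greenJump]
  split_ifs
  · rw [abs_zero]
    linarith
  · rw [abs_div, Nat.abs_cast]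
    refine (div_le_self (abs_nonneg _) hN).trans (abs_le.2 ⟨?_, ?_⟩) <;> linarith

lemma sum_greenJump_update (hF : IsCylinderContent F) (x : SSp N) (n : ℕ) :
    ∑ s, greenJump F n (Function.update x (n + 1) s) =
      F (n + 2) (Function.update x (n + 1) (x n)) - F (n + 1) x := by
  have hN : (N : ℝ) ≠ 0 := Nat.cast_ne_zero.2 (x 0).pos.ne'
  set T := F (n + 1) x - F (n + 2) (Function.update x (n + 1) (x n)) with hT
  have hparent : ∀ s, F (n + 1) (Function.update x (n + 1) s) = F (n + 1) x := fun s =>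
    hF.dependsOn (n + 1) fun i hi => Function.update_of_ne (Set.mem_Iio.1 hi).ne s x
  have hterm : ∀ s, greenJump F n (Function.update x (n + 1) s) =
      if s = x n then 0 else -(F (n + 2) (Function.update x (n + 1) s) + T) / N := fun s => by
    simp only [greenJump, Function.update_self, Function.update_of_ne n.succ_ne_self.symm,
      Function.update_idem, hparent, hT]
  have hsiblings : ∑ s ∈ univ.erase (x n), F (n + 2) (Function.update x (n + 1) s) = T := by
    rw [sum_erase_eq_sub (mem_univ _), hF.sum_update, hT]
  have hcard : ((univ.erase (x n)).card : ℝ) = N - 1 := by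
    rw [card_erase_of_mem (mem_univ _), card_univ, Fintype.card_fin, Nat.cast_pred (x 0).pos]
  calc ∑ s, greenJump F n (Function.update x (n + 1) s)
      = ∑ s ∈ univ.erase (x n), -(F (n + 2) (Function.update x (n + 1) s) + T) / N := by
        rw [← add_sum_erase _ _ (mem_univ (x n)), hterm, if_pos rfl, zero_add]
        exact sum_congr rfl fun s hs => by rw [hterm, if_neg (ne_of_mem_erase hs)]
    _ = -(T + (N - 1) * T) / N := by
        rw [← sum_div, sum_neg_distrib, sum_add_distrib, hsiblings, sum_const, nsmul_eq_mul, hcard]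
    _ = F (n + 2) (Function.update x (n + 1) (x n)) - F (n + 1) x := by
        field_simp
        rw [hT]
        ring

lemma sum_U_jumpSeries_greenJump_of_ne (hF : IsCylinderContent F) {p : SSp N} {n : ℕ}
    (hp : p ∈ V N (n + 1)) (h : p (n + 1) ≠ p n) :
    ∑ q ∈ U N (n + 1) p, (jumpSeries ζ (greenJump F) q - jumpSeries ζ (greenJump F) p) =
      F (n + 2) p := by
  have hN : (N : ℝ) ≠ 0 := Nat.cast_ne_zero.2 (p 0).pos.ne'
  rw [sum_U_jumpSeries (isJumpFamily_greenJump hF.dependsOn) hp, sum_greenJump_update hF,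
    greenJump, if_neg h, mul_div_cancel₀ _ hN]
  ring

lemma sum_U_jumpSeries_greenJump_of_eq (hF : IsCylinderContent F) {p : SSp N} {n : ℕ}
    (hp : p ∈ V N (n + 1)) (h : p (n + 1) = p n) :
    ∑ q ∈ U N (n + 1) p, (jumpSeries ζ (greenJump F) q - jumpSeries ζ (greenJump F) p) =
      F (n + 2) p - F (n + 1) p := by
  have hjump := isJumpFamily_greenJump hF.dependsOn
  rw [sum_U_jumpSeries hjump hp, sum_greenJump_update hF, hjump.eq_zero n p h, mul_zero, sub_zero,
    ← h, Function.update_eq_self]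

lemma H_jumpSeries_greenJump (hF : IsCylinderContent F) {p : SSp N} {m : ℕ} (hp : p ∈ V N m)
    (hp₀ : p ∉ V N 0) : H N m (jumpSeries ζ (greenJump F)) p = F (m + 1) p := by
  have hpκ := mem_V_kappa hp
  obtain ⟨k, hk⟩ : ∃ k, kappa N p = k + 1 :=
    Nat.exists_eq_succ_of_ne_zero fun h => hp₀ (h ▸ hpκ)
  induction m, kappa_le hp using Nat.le_induction with
  | base =>
    rw [H_kappa, hk]
    rw [hk] at hpκ
    exact sum_U_jumpSeries_greenJump_of_ne hF hpκ (apply_succ_ne_of_kappa_eq_succ hpκ hk)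
  | succ m hm ih =>
    have hpm : p ∈ V N m := V_mono_s10 hm hpκ
    rw [H_succ _ (hm.trans m.le_succ), ih hpm,
      sum_U_jumpSeries_greenJump_of_eq hF hp (mem_V.1 hpm m le_rfl).symm, add_sub_cancel]

end GreenJump

section Bernoulli

lemma measurableSet_cyl (N m : ℕ) (x : SSp N) : MeasurableSet (cyl N m x) :=
  (PiNat.isOpen_cylinder (fun _ => Fin N) x m).measurableSet

lemma exists_isBernoulli (N : ℕ) [NeZero N] :
    ∃ μ : Measure (SSp N), IsProbabilityMeasure μ ∧ IsBernoulli N μ := by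
  refine ⟨Measure.infinitePi fun _ => (PMF.uniformOfFintype (Fin N)).toMeasure, inferInstance,
    fun m p => ?_⟩
  rw [show cyl N m p = PiNat.cylinder p m from rfl, PiNat.cylinder_eq_pi,
    Measure.infinitePi_pi _ fun i _ => measurableSet_singleton _]
  simp

variable {N : ℕ} {μ : Measure (SSp N)} {f : SSp N → ℝ}

lemma IsBernoulli.measureReal_cyl (hμ : IsBernoulli N μ) (m : ℕ) (x : SSp N) :
    μ.real (cyl N m x) = ((N : ℝ)⁻¹) ^ m := by
  simp [Measure.real, hμ m x]

lemma isCylinderContent_setIntegral_cyl (hf : Integrable f μ) :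
    IsCylinderContent fun m x => ∫ y in cyl N m x, f y ∂μ where
  dependsOn m x y h := by
    have hcyl : cyl N m x = cyl N m y := PiNat.mem_cylinder_iff_eq.1 h
    simp only [hcyl]
  sum_update m x := by
    have hunion : ⋃ s, cyl N (m + 1) (Function.update x m s) = cyl N m x :=
      PiNat.iUnion_cylinder_update x m
    rw [← hunion, integral_iUnion_fintype (fun s => measurableSet_cyl N _ _) ?_
      fun s => hf.integrableOn]
    refine fun s t hst => Set.disjoint_left.2 fun y hs ht => hst ?_
    simpa only [Function.update_self] using (hs m m.lt_succ_self).symm.trans (ht m m.lt_succ_self)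

lemma IsBernoulli.abs_setIntegral_cyl_le [IsFiniteMeasure μ] (hμ : IsBernoulli N μ) {C : ℝ}
    (hC : ∀ y, |f y| ≤ C) (m : ℕ) (x : SSp N) :
    |∫ y in cyl N m x, f y ∂μ| ≤ C * ((N : ℝ)⁻¹) ^ m := by
  rw [← hμ.measureReal_cyl m x]
  exact norm_setIntegral_le_of_norm_le_const (f := f) (measure_lt_top μ _) fun y _ => hC y

lemma IsBernoulli.abs_pow_mul_setIntegral_cyl_sub_le [IsFiniteMeasure μ] (hμ : IsBernoulli N μ)
    (hf : Integrable f μ) {c ε : ℝ} {m : ℕ} {x : SSp N} (hε : ∀ y ∈ cyl N m x, |f y - c| ≤ ε) :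
    |(N : ℝ) ^ m * ∫ y in cyl N m x, f y ∂μ - c| ≤ ε := by
  have hμ₀ : μ (cyl N m x) ≠ 0 := by simp [hμ m x]
  have hmean : (⨍ y in cyl N m x, f y ∂μ) ∈ Metric.closedBall c ε :=
    (convex_closedBall c ε).set_average_mem Metric.isClosed_closedBall hμ₀ (measure_ne_top μ _)
      (ae_restrict_of_forall_mem (measurableSet_cyl N m x) hε) hf.integrableOn
  rwa [setAverage_eq, hμ.measureReal_cyl, inv_pow, inv_inv, smul_eq_mul] at hmean

end Bernoulli

lemma summable_const_mul_inv_pow {N : ℕ} (hN : 2 ≤ N) (C : ℝ) :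
    Summable fun m => C * ((N : ℝ)⁻¹) ^ m :=
  (summable_geometric_of_lt_one (by positivity)
    (inv_lt_one_of_one_lt₀ (by exact_mod_cast hN))).mul_left C

lemma exists_isLaplacianOn_eq_on_V_zero {N : ℕ} (hN : 2 ≤ N) {f : SSp N → ℝ} (hf : Continuous f)
    (ζ : SSp N → ℝ) : ∃ u, IsLaplacianOn N 0 u f ∧ ∀ p ∈ V N 0, u p = ζ p := by
  have : NeZero N := ⟨by omega⟩
  obtain ⟨μ, _, hμ⟩ := exists_isBernoulli N
  obtain ⟨C, hC⟩ := isCompact_univ.exists_bound_of_continuousOn hf.continuousOn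
  have hint : Integrable f μ :=
    .of_bound hf.aestronglyMeasurable C (.of_forall fun y => hC y trivial)
  have hF := isCylinderContent_setIntegral_cyl hint
  have hjump := isJumpFamily_greenJump hF.dependsOn
  have hsum := summable_const_mul_inv_pow hN C
  refine ⟨jumpSeries ζ (greenJump fun m x => ∫ y in cyl N m x, f y ∂μ), ⟨?_, hf, fun ε hε => ?_⟩,
    fun p hp => jumpSeries_of_mem_V_zero hjump hp⟩
  · exact continuous_jumpSeries hjump
      ((((summable_nat_add_iff 2).2 hsum).mul_left 2).add ((summable_nat_add_iff 1).2 hsum))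
      (abs_greenJump_le (hμ.abs_setIntegral_cyl_le fun y => hC y trivial))
  · obtain ⟨m₀, hm₀⟩ := exists_forall_mem_cylinder_dist_lt hf (half_pos hε)
    refine ⟨m₀, fun m hm p hp hp₀ => ?_⟩
    rw [H_jumpSeries_greenJump hF hp hp₀]
    refine (hμ.abs_pow_mul_setIntegral_cyl_sub_le hint fun y hy => ?_).trans_lt (half_lt_self hε)
    exact (hm₀ p y (PiNat.cylinder_anti p (by omega) hy)).le

/-- Dirichlet boundary value problem: for every continuous `f` and
every `ζ : V_0 → ℝ` there is `u ∈ 𝒟_0` with `Δu = f` and `u|_{V_0} = ζ`; the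
solution is unique up to harmonic functions vanishing on `V_0`. -/
theorem statement10 (N : ℕ) (hN : 2 ≤ N) (f : SSp N → ℝ) (hf : Continuous f)
    (ζ : SSp N → ℝ) :
    (∃ u : SSp N → ℝ, IsLaplacianOn N 0 u f ∧ ∀ p ∈ V N 0, u p = ζ p) ∧
    (∀ u₁ u₂ : SSp N → ℝ,
      (IsLaplacianOn N 0 u₁ f ∧ ∀ p ∈ V N 0, u₁ p = ζ p) →
      (IsLaplacianOn N 0 u₂ f ∧ ∀ p ∈ V N 0, u₂ p = ζ p) →
      IsLaplacianOn N 0 (fun x => u₁ x - u₂ x) (fun _ => 0) ∧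
        ∀ p ∈ V N 0, u₁ p - u₂ p = 0) := by
  refine ⟨exists_isLaplacianOn_eq_on_V_zero hN hf ζ, ?_⟩
  rintro u₁ u₂ ⟨hu₁, hζ₁⟩ ⟨hu₂, hζ₂⟩
  have hsub := hu₁.sub hu₂
  simp only [sub_self] at hsub
  exact ⟨hsub, fun p hp => by rw [hζ₁ p hp, hζ₂ p hp, sub_self]⟩
end
end
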